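/- arXiv:2001.11755 — 7 statements merged into one kernel-verified Lean document; each statement's English description precedes it below -/
import Mathlib

section
/- Let A be a real number with 3 ≤ A < 2^(5/3). Then for all positive real numbers x, y, z satisfying x + y + z = A and x·y·z = 1, the three strict triangle inequalities hold: x + y > z, y + z > x, and z + x > y. -/
/-! Where a triangle inequality fails, say `x + y ≤ z`, the perimeter is large compared with the
product: AM-GM gives `4xy ≤ (x + y)²`, and at fixed `x + y = s` the ratio `(s + z)³ / z` is
nondecreasing for `z ≥ s / 2`, so on `z ≥ s` it is at least its value `8s²` at the degenerate
triangle `z = s`. Hence `(x + y + z)³ ≥ 8s²z ≥ 32xyz`, and `2^(5/3)` is the cube root of `32`. -/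

section OrderedRing

variable {R : Type*} [CommRing R] [LinearOrder R] [IsStrictOrderedRing R] {x y z : R}

theorem eight_mul_sq_mul_le_add_pow_three {s z : R} (hs : 0 ≤ s) (hsz : s ≤ z) :
    8 * s ^ 2 * z ≤ (s + z) ^ 3 := by
  have hz : 0 ≤ z := hs.trans hsz
  have hsq : s ^ 2 ≤ z ^ 2 := pow_le_pow_left₀ hs hsz 2
  have hquad : 0 ≤ z ^ 2 + 4 * s * z - s ^ 2 := by
    have : 0 ≤ s * z := mul_nonneg hs hz
    linarith
  have hfactor : (s + z) ^ 3 - 8 * s ^ 2 * z = (z - s) * (z ^ 2 + 4 * s * z - s ^ 2) := by ring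
  rw [← sub_nonneg, hfactor]
  exact mul_nonneg (sub_nonneg.mpr hsz) hquad

theorem thirty_two_mul_le_add_pow_three (hxy : 0 ≤ x + y) (hxyz : x + y ≤ z) :
    32 * (x * y * z) ≤ (x + y + z) ^ 3 :=
  calc
    32 * (x * y * z) = 8 * (4 * x * y) * z := by ring
    _ ≤ 8 * (x + y) ^ 2 * z := by
      have hz : 0 ≤ z := hxy.trans hxyz
      gcongr
      exact four_mul_le_sq_add x y
    _ ≤ (x + y + z) ^ 3 := eight_mul_sq_mul_le_add_pow_three hxy hxyz

theorem lt_add_of_add_pow_three_lt (hxy : 0 ≤ x + y) (h : (x + y + z) ^ 3 < 32 * (x * y * z)) :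
    z < x + y := by
  contrapose! h
  exact thirty_two_mul_le_add_pow_three hxy h

theorem triangle_inequalities_of_trace_lt_general (hx : 0 ≤ x) (hy : 0 ≤ y) (hz : 0 ≤ z)
    (h : (x + y + z) ^ 3 < 32 * (x * y * z)) :
    x + y > z ∧ y + z > x ∧ z + x > y :=
  ⟨lt_add_of_add_pow_three_lt (add_nonneg hx hy) h,
    lt_add_of_add_pow_three_lt (add_nonneg hy hz) (by convert h using 1 <;> ring),
    lt_add_of_add_pow_three_lt (add_nonneg hz hx) (by convert h using 1 <;> ring)⟩

end OrderedRing

theorem lt_rpow_natCast_div_natCast_iff {a b : ℝ} (ha : 0 ≤ a) (hb : 0 ≤ b) (m : ℕ) {n : ℕ}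
    (hn : n ≠ 0) : a < b ^ ((m : ℝ) / n) ↔ a ^ n < b ^ m := by
  have hpow : (b ^ ((m : ℝ) / n)) ^ n = b ^ m := by
    rw [← Real.rpow_mul_natCast hb, div_mul_cancel₀ _ (Nat.cast_ne_zero.mpr hn),
      Real.rpow_natCast]
  rw [← hpow, pow_lt_pow_iff_left₀ ha (Real.rpow_nonneg hb _) hn]

/-- For `3 ≤ A < 2^(5/3)` and positive reals `x, y, z` with
`x + y + z = A` and `x * y * z = 1`, the three strict triangle inequalities hold. -/
theorem triangle_inequalities_of_trace_lt
    (A : ℝ) (hA3 : 3 ≤ A) (hA : A < (2 : ℝ) ^ ((5 : ℝ) / 3))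
    (x y z : ℝ) (hx : 0 < x) (hy : 0 < y) (hz : 0 < z)
    (hsum : x + y + z = A) (hprod : x * y * z = 1) :
    x + y > z ∧ y + z > x ∧ z + x > y := by
  have hcube : A ^ 3 < 2 ^ 5 :=
    (lt_rpow_natCast_div_natCast_iff (by linarith) zero_le_two 5 three_ne_zero).mp hA
  exact triangle_inequalities_of_trace_lt_general hx.le hy.le hz.le (by rw [hsum, hprod]; linarith)
end

section
/- Let Q be a 3×3 real symmetric positive definite matrix with det Q = 1 and trace Q < 2^(5/3). Then every eigenvalue λ of Q satisfies 2λ < trace Q. -/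
/-!
Let `μ` be an eigenvalue of a positive semidefinite matrix `A` of size `n ≥ 2`, and let `σ` be the
sum of the `n - 1` others. By AM-GM, `(n - 1) ^ (n - 1) * det A ≤ μ * σ ^ (n - 1)`. If `σ ≤ μ`, then
also `μ * σ ^ (n - 1) = (μ * σ) * σ ^ (n - 2) ≤ ((μ + σ) / 2) ^ n`, so that
`2 ^ n * (n - 1) ^ (n - 1) * det A ≤ (trace A) ^ n`. For `n = 3` and `det A = 1` the left-hand side
is `32 = (2 ^ (5 / 3)) ^ 3`.
-/

open Finset

theorem two_pow_mul_mul_pow_le_add_pow {R : Type*} [CommRing R] [LinearOrder R]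
    [IsStrictOrderedRing R] {a b : R} {p : ℕ} (hp : p ≠ 0) (hb : 0 ≤ b) (hba : b ≤ a) :
    2 ^ (p + 1) * (a * b ^ p) ≤ (a + b) ^ (p + 1) := by
  obtain ⟨q, rfl⟩ := Nat.exists_eq_succ_of_ne_zero hp
  calc 2 ^ (q + 2) * (a * b ^ (q + 1)) = 4 * a * b * (2 * b) ^ q := by ring
    _ ≤ (a + b) ^ 2 * (a + b) ^ q := by
      gcongr
      · exact four_mul_le_sq_add a b
      · linarith
    _ = (a + b) ^ (q + 2) := by ring

theorem card_pow_card_mul_prod_le_sum_pow_card {ι : Type*} {s : Finset ι} {x : ι → ℝ}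
    (hx : ∀ i ∈ s, 0 ≤ x i) : (#s : ℝ) ^ #s * ∏ i ∈ s, x i ≤ (∑ i ∈ s, x i) ^ #s := by
  obtain rfl | hs := s.eq_empty_or_nonempty
  · simp
  have hcard : (0 : ℝ) < #s := by exact_mod_cast hs.card_pos
  have geom_le_arith : (∏ i ∈ s, x i) ^ (#s : ℝ)⁻¹ ≤ (∑ i ∈ s, x i) / #s := by
    simpa using Real.geom_mean_le_arith_mean s 1 x (by simp) (by simpa using hs) hx
  have prod_le : ∏ i ∈ s, x i ≤ ((∑ i ∈ s, x i) / #s) ^ #s := by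
    rw [← Real.rpow_natCast]
    exact (Real.rpow_inv_le_iff_of_pos (prod_nonneg hx)
      (div_nonneg (sum_nonneg hx) hcard.le) hcard).1 geom_le_arith
  rwa [div_pow, le_div_iff₀' (by positivity)] at prod_le

theorem two_mul_lt_sum_of_sum_pow_card_lt {ι : Type*} {s : Finset ι} {x : ι → ℝ}
    (hs : s.Nontrivial) (hx : ∀ i ∈ s, 0 ≤ x i)
    (hsum : (∑ i ∈ s, x i) ^ #s < 2 ^ #s * ((#s - 1 : ℕ) : ℝ) ^ (#s - 1) * ∏ i ∈ s, x i)
    {i : ι} (hi : i ∈ s) : 2 * x i < ∑ j ∈ s, x j := by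
  classical
  set p := #s - 1
  have card_erase : #(s.erase i) = p := card_erase_of_mem hi
  have card_eq : #s = p + 1 := by rw [← card_erase, card_erase_add_one hi]
  have p_ne_zero : p ≠ 0 := Nat.sub_ne_zero_of_lt (one_lt_card_iff_nontrivial.2 hs)
  set σ := ∑ j ∈ s.erase i, x j
  have sum_eq : ∑ j ∈ s, x j = x i + σ := (add_sum_erase s x hi).symm
  have hx_erase : ∀ j ∈ s.erase i, 0 ≤ x j := fun j hj ↦ hx j (mem_of_mem_erase hj)
  have am_gm : (p : ℝ) ^ p * ∏ j ∈ s.erase i, x j ≤ σ ^ p := by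
    simpa only [card_erase] using card_pow_card_mul_prod_le_sum_pow_card hx_erase
  by_contra! sum_le
  refine hsum.not_ge ?_
  calc 2 ^ #s * (p : ℝ) ^ p * ∏ j ∈ s, x j
      = 2 ^ (p + 1) * (x i * ((p : ℝ) ^ p * ∏ j ∈ s.erase i, x j)) := by
        rw [← mul_prod_erase s x hi, card_eq]; ring
    _ ≤ 2 ^ (p + 1) * (x i * σ ^ p) := by
        have := hx i hi
        gcongr
    _ ≤ (x i + σ) ^ (p + 1) :=
        two_pow_mul_mul_pow_le_add_pow p_ne_zero (sum_nonneg hx_erase) (by linarith)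
    _ = (∑ j ∈ s, x j) ^ #s := by rw [sum_eq, card_eq]

open scoped ComplexOrder in
theorem eigenvalue_lt_half_trace_general {n 𝕜 : Type*} [Fintype n] [DecidableEq n] [Nontrivial n]
    [RCLike 𝕜] {A : Matrix n n 𝕜} (hA : A.PosSemidef)
    (htr : RCLike.re A.trace ^ Fintype.card n <
      2 ^ Fintype.card n * ((Fintype.card n - 1 : ℕ) : ℝ) ^ (Fintype.card n - 1) *
        RCLike.re A.det)
    {μ : ℝ} (hμ : μ ∈ spectrum ℝ A) : 2 * μ < RCLike.re A.trace := by
  rw [hA.isHermitian.spectrum_real_eq_range_eigenvalues] at hμ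
  obtain ⟨i, rfl⟩ := hμ
  have trace_eq : RCLike.re A.trace = ∑ j, hA.isHermitian.eigenvalues j := by
    rw [hA.isHermitian.trace_eq_sum_eigenvalues, ← RCLike.ofReal_sum, RCLike.ofReal_re]
  have det_eq : RCLike.re A.det = ∏ j, hA.isHermitian.eigenvalues j := by
    rw [hA.isHermitian.det_eq_prod_eigenvalues, ← RCLike.ofReal_prod, RCLike.ofReal_re]
  rw [trace_eq, det_eq] at htr
  rw [trace_eq]
  exact two_mul_lt_sum_of_sum_pow_card_lt univ_nontrivial
    (fun j _ ↦ hA.eigenvalues_nonneg j) htr (mem_univ i)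

theorem lt_two_rpow_five_thirds_iff {t : ℝ} : t < (2 : ℝ) ^ ((5 : ℝ) / 3) ↔ t ^ 3 < 32 := by
  have rpow_pow : ((2 : ℝ) ^ ((5 : ℝ) / 3)) ^ 3 = 32 := by
    rw [← Real.rpow_mul_natCast zero_le_two]
    norm_num
  rw [← rpow_pow, (Odd.strictMono_pow (by decide)).lt_iff_lt]

/-- If `Q` is a real symmetric positive definite `3×3` matrix with
`det Q = 1` and `trace Q < 2^(5/3)`, then every eigenvalue `μ` of `Q` satisfies
`2 * μ < trace Q`. -/
theorem eigenvalue_lt_half_trace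
    (Q : Matrix (Fin 3) (Fin 3) ℝ) (hsym : Q.IsSymm) (hpd : Q.PosDef)
    (hdet : Q.det = 1) (htr : Q.trace < (2 : ℝ) ^ ((5 : ℝ) / 3)) :
    ∀ μ : ℝ, μ ∈ spectrum ℝ Q → 2 * μ < Q.trace := by
  have trace_pow_lt := lt_two_rpow_five_thirds_iff.1 htr
  exact fun μ ↦ eigenvalue_lt_half_trace_general hpd.posSemidef (by norm_num [hdet, trace_pow_lt])
end

section
/- Fix a real number a > 0 and define v_a : ℝ → ℝ by v_a(x) = 32a / (32 − a²x²). Then v_a(0) = a, the derivative of v_a at 0 is 0, and for every x with 0 < x < 4√2/a, the function v_a satisfies the ordinary differential equation v_a''(x) + (3/x)·v_a'(x) = (1/4)·v_a(x)³. -/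
/-!
For a radial profile `u y = α / (β - γ y²)` one finds
`u'' + (k / y) u' = 2 α γ ((k + 1) β + (3 - k) γ y²) / (β - γ y²)³`.
When `k = 3`, the radial Laplacian in dimension four, the term in `y²` of the numerator drops out,
so that the right-hand side is a constant multiple of `u³`; for `α = 32 a`, `β = 32`, `γ = a²` the
constant is `8 β γ / α² = 1 / 4`.
-/

section InverseQuadratic

variable {𝕜 : Type*}

/-- The radial profile `y ↦ α / (β - γ y²)`. The comparison function `v_a` is
`inverseQuadratic (32 * a) 32 (a ^ 2)`; separate coefficients make visible which relation between
them the differential equation requires. The value is `0` where the denominator vanishes. -/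
def inverseQuadratic [Field 𝕜] (α β γ : 𝕜) (y : 𝕜) : 𝕜 :=
  α / (β - γ * y ^ 2)

namespace inverseQuadratic

variable [NontriviallyNormedField 𝕜] {β γ x : 𝕜}

lemma hasDerivAt_denom (β γ x : 𝕜) :
    HasDerivAt (fun y ↦ β - γ * y ^ 2) (-(2 * γ * x)) x :=
  (((hasDerivAt_pow 2 x).const_mul γ).const_sub β).congr_deriv (by push_cast; ring)

lemma hasDerivAt (α : 𝕜) (hx : β - γ * x ^ 2 ≠ 0) :
    HasDerivAt (inverseQuadratic α β γ) (2 * α * γ * x / (β - γ * x ^ 2) ^ 2) x :=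
  ((hasDerivAt_const x α).div (hasDerivAt_denom β γ x) hx).congr_deriv (by ring)

lemma deriv_eventuallyEq (α : 𝕜) (hx : β - γ * x ^ 2 ≠ 0) :
    deriv (inverseQuadratic α β γ) =ᶠ[nhds x]
      fun y ↦ 2 * α * γ * y / (β - γ * y ^ 2) ^ 2 := by
  filter_upwards [(hasDerivAt_denom β γ x).continuousAt.eventually_ne hx] with y hy
  exact (hasDerivAt α hy).deriv

lemma hasDerivAt_deriv (α : 𝕜) (hx : β - γ * x ^ 2 ≠ 0) :
    HasDerivAt (deriv (inverseQuadratic α β γ))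
      (2 * α * γ * (β + 3 * γ * x ^ 2) / (β - γ * x ^ 2) ^ 3) x := by
  have h_num : HasDerivAt (fun y ↦ 2 * α * γ * y) (2 * α * γ) x := by
    simpa using (hasDerivAt_id x).const_mul (2 * α * γ)
  have h_denom : HasDerivAt (fun y ↦ (β - γ * y ^ 2) ^ 2)
      (2 * (β - γ * x ^ 2) * -(2 * γ * x)) x := by
    simpa using (hasDerivAt_denom β γ x).fun_pow 2
  refine ((h_num.div h_denom (pow_ne_zero 2 hx)).congr_deriv ?_).congr_of_eventuallyEq
    (deriv_eventuallyEq α hx)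
  field_simp
  ring

theorem deriv_deriv_add_div_mul_deriv (k α : 𝕜) (hx₀ : x ≠ 0) (hx : β - γ * x ^ 2 ≠ 0) :
    deriv (deriv (inverseQuadratic α β γ)) x + k / x * deriv (inverseQuadratic α β γ) x =
      2 * α * γ * ((k + 1) * β + (3 - k) * γ * x ^ 2) / (β - γ * x ^ 2) ^ 3 := by
  rw [(hasDerivAt_deriv α hx).deriv, (hasDerivAt α hx).deriv]
  field_simp
  ring

end inverseQuadratic

end InverseQuadratic

theorem comparison_function_solves_ode_general {𝕜 : Type*} [NontriviallyNormedField 𝕜]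
    [NeZero (2 : 𝕜)] (a : 𝕜) :
    (fun x : 𝕜 ↦ 32 * a / (32 - a ^ 2 * x ^ 2)) 0 = a ∧
    deriv (fun x : 𝕜 ↦ 32 * a / (32 - a ^ 2 * x ^ 2)) 0 = 0 ∧
    ∀ x : 𝕜, x ≠ 0 → a ^ 2 * x ^ 2 ≠ 32 →
      deriv (deriv (fun x : 𝕜 ↦ 32 * a / (32 - a ^ 2 * x ^ 2))) x
        + (3 / x) * deriv (fun x : 𝕜 ↦ 32 * a / (32 - a ^ 2 * x ^ 2)) x
      = (1 / 4) * ((fun x : 𝕜 ↦ 32 * a / (32 - a ^ 2 * x ^ 2)) x) ^ 3 := by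
  have two_ne : (2 : 𝕜) ≠ 0 := two_ne_zero
  have four_ne : (4 : 𝕜) ≠ 0 := by convert pow_ne_zero 2 two_ne using 1; norm_num
  have thirtyTwo_ne : (32 : 𝕜) ≠ 0 := by convert pow_ne_zero 5 two_ne using 1; norm_num
  refine ⟨by simp [thirtyTwo_ne], ?_, fun x hx₀ hx ↦ ?_⟩
  · have h_denom : 32 - a ^ 2 * 0 ^ 2 ≠ 0 := by simpa using thirtyTwo_ne
    exact (inverseQuadratic.hasDerivAt (32 * a) h_denom).deriv.trans (by simp)
  · have h_denom : 32 - a ^ 2 * x ^ 2 ≠ 0 := sub_ne_zero.mpr hx.symm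
    refine (inverseQuadratic.deriv_deriv_add_div_mul_deriv 3 (32 * a) hx₀ h_denom).trans ?_
    field_simp
    ring

lemma sq_mul_sq_lt_of_lt_four_mul_sqrt_two_div {a x : ℝ} (ha : 0 < a) (hx₀ : 0 ≤ x)
    (hx : x < 4 * √2 / a) : a ^ 2 * x ^ 2 < 32 :=
  calc
    a ^ 2 * x ^ 2 = (x * a) ^ 2 := by ring
    _ < (4 * √2) ^ 2 := by
      have : x * a < 4 * √2 := (lt_div_iff₀ ha).mp hx
      gcongr
    _ = 32 := by rw [mul_pow, Real.sq_sqrt zero_le_two]; norm_num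

/-- The function `v_a (x) = 32 a / (32 - a² x²)` satisfies `v_a 0 = a`,
`v_a' 0 = 0`, and the ODE `v_a'' + (3/x) v_a' = (1/4) v_a³` for `0 < x < 4√2 / a`. -/
theorem comparison_function_solves_ode (a : ℝ) (ha : 0 < a) :
    (fun x : ℝ => 32 * a / (32 - a ^ 2 * x ^ 2)) 0 = a ∧
    deriv (fun x : ℝ => 32 * a / (32 - a ^ 2 * x ^ 2)) 0 = 0 ∧
    ∀ x : ℝ, 0 < x → x < 4 * Real.sqrt 2 / a →
      deriv (deriv (fun x : ℝ => 32 * a / (32 - a ^ 2 * x ^ 2))) x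
        + (3 / x) * deriv (fun x : ℝ => 32 * a / (32 - a ^ 2 * x ^ 2)) x
      = (1 / 4) * ((fun x : ℝ => 32 * a / (32 - a ^ 2 * x ^ 2)) x) ^ 3 := by
  obtain ⟨h_value, h_deriv, h_ode⟩ := comparison_function_solves_ode_general a
  exact ⟨h_value, h_deriv, fun x hx₀ hx ↦
    h_ode x hx₀.ne' (sq_mul_sq_lt_of_lt_four_mul_sqrt_two_div ha hx₀.le hx).ne⟩
end

section
/- Fix a real number a > 0 and define v_a : ℝ → ℝ by v_a(x) = 32a / (32 − a²x²). If v : ℝ → ℝ is twice continuously differentiable on [0, 4√2/a) with v(0) = a and v'(0) = 0, and v satisfies v''(x) + (3/x)·v'(x) = (1/4)·v(x)³ for all x with 0 < x < 4√2/a, then v(x) = v_a(x) for all x in [0, 4√2/a). -/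
/-!
For two solutions `u`, `v` of `v'' + (k / x) v' = f (v)` with `k > 0`, put `w = v - u`. The singular
term enters `⟪w', w''⟫` as `-(k / x) ‖w'‖²`, so it only damps the energy `‖w‖² + ‖w'‖²`, and
Grönwall's inequality forces `w = 0` as soon as `w` and `w'` vanish at `0`. The equation itself
gives `w'(0) = 0`: multiplying it by `x` and letting `x → 0` yields `k v'(0) = 0`, and likewise
for `u`.
-/

open Set
open scoped NNReal RealInnerProductSpace

section Energy

variable {E : Type*} [NormedAddCommGroup E] [InnerProductSpace ℝ E]

theorem eq_zero_of_inner_deriv_deriv_le {w w' w'' : ℝ → E} {a b : ℝ} {K : ℝ≥0}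
    (hw : ContinuousOn w (Icc a b)) (hw' : ContinuousOn w' (Icc a b))
    (hderiv : ∀ x ∈ Ico a b, HasDerivWithinAt w (w' x) (Ici x) x)
    (hderiv' : ∀ x ∈ Ico a b, HasDerivWithinAt w' (w'' x) (Ici x) x)
    (hwa : w a = 0) (hwa' : w' a = 0)
    (hbound : ∀ x ∈ Ico a b, ⟪w' x, w'' x⟫ ≤ K * (‖w x‖ * ‖w' x‖)) :
    ∀ x ∈ Icc a b, w x = 0 := by
  intro x hx
  have energy_deriv_le : ∀ y ∈ Ico a b,
      2 * ⟪w y, w' y⟫ + 2 * ⟪w' y, w'' y⟫ ≤ (1 + K) * (‖w y‖ ^ 2 + ‖w' y‖ ^ 2) + 0 := by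
    intro y hy
    calc 2 * ⟪w y, w' y⟫ + 2 * ⟪w' y, w'' y⟫
        ≤ 2 * (‖w y‖ * ‖w' y‖) + 2 * (K * (‖w y‖ * ‖w' y‖)) := by
          gcongr
          · exact real_inner_le_norm _ _
          · exact hbound y hy
      _ = (1 + K) * (2 * ‖w y‖ * ‖w' y‖) := by ring
      _ ≤ (1 + K) * (‖w y‖ ^ 2 + ‖w' y‖ ^ 2) + 0 := by
          rw [add_zero]
          gcongr
          exact two_mul_le_add_sq _ _
  have energy_le : ‖w x‖ ^ 2 + ‖w' x‖ ^ 2 ≤ gronwallBound 0 (1 + K) 0 (x - a) :=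
    le_gronwallBound_of_liminf_deriv_right_le (f := fun y ↦ ‖w y‖ ^ 2 + ‖w' y‖ ^ 2)
      (by fun_prop)
      (fun y hy _ ↦ ((hderiv y hy).norm_sq.add (hderiv' y hy).norm_sq).liminf_right_slope_le)
      (by simp [hwa, hwa']) energy_deriv_le x hx
  rw [gronwallBound_ε0_δ0] at energy_le
  have : ‖w x‖ ^ 2 = 0 := by linarith [sq_nonneg ‖w x‖, sq_nonneg ‖w' x‖]
  simpa using this

end Energy

section RadialSolution

/-- `v` is a radial solution of `Δ v = f v` on the ball of radius `R` in dimension `k + 1`, as a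
function of the distance to the origin: it is `C²` up to the origin (from the right) and solves
`v'' + (k / x) v' = f (v)` away from it. -/
structure IsRadialSolution {E : Type*} [NormedAddCommGroup E] [NormedSpace ℝ E]
    (k : ℝ) (f : E → E) (R : ℝ) (v : ℝ → E) : Prop where
  contDiffOn : ContDiffOn ℝ 2 v (Ico 0 R)
  ode : ∀ x ∈ Ioo 0 R, deriv (deriv v) x + (k / x) • deriv v x = f (v x)

namespace IsRadialSolution

section NormedSpace

variable {E : Type*} [NormedAddCommGroup E] [NormedSpace ℝ E]
  {k R : ℝ} {f : E → E} {v : ℝ → E}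

theorem contDiffOn_derivWithin (hv : IsRadialSolution k f R v) :
    ContDiffOn ℝ 1 (derivWithin v (Ico 0 R)) (Ico 0 R) :=
  hv.contDiffOn.derivWithin (uniqueDiffOn_Ico 0 R) (by norm_num)

theorem hasDerivWithinAt (hv : IsRadialSolution k f R v) {x : ℝ} (hx : x ∈ Ico 0 R) :
    HasDerivWithinAt v (derivWithin v (Ico 0 R) x) (Ici x) x :=
  (hv.contDiffOn.differentiableOn two_ne_zero x hx).hasDerivWithinAt.mono_of_mem_nhdsWithin
    (Ico_mem_nhdsGE_of_mem hx)

theorem hasDerivWithinAt_derivWithin (hv : IsRadialSolution k f R v) {x : ℝ} (hx : x ∈ Ico 0 R) :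
    HasDerivWithinAt (derivWithin v (Ico 0 R))
      (derivWithin (derivWithin v (Ico 0 R)) (Ico 0 R) x) (Ici x) x :=
  (hv.contDiffOn_derivWithin.differentiableOn one_ne_zero x hx).hasDerivWithinAt
    |>.mono_of_mem_nhdsWithin (Ico_mem_nhdsGE_of_mem hx)

theorem derivWithin_ode (hv : IsRadialSolution k f R v) {x : ℝ} (hx : x ∈ Ioo 0 R) :
    derivWithin (derivWithin v (Ico 0 R)) (Ico 0 R) x + (k / x) • derivWithin v (Ico 0 R) x =
      f (v x) := by
  have derivWithin_eq : ∀ y ∈ Ioo 0 R, derivWithin v (Ico 0 R) y = deriv v y :=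
    fun y hy ↦ derivWithin_of_mem_nhds (Ico_mem_nhds hy.1 hy.2)
  have derivWithin_eventuallyEq : derivWithin v (Ico 0 R) =ᶠ[nhds x] deriv v :=
    Filter.eventuallyEq_of_mem (Ioo_mem_nhds hx.1 hx.2) derivWithin_eq
  rw [derivWithin_of_mem_nhds (Ico_mem_nhds hx.1 hx.2), derivWithin_eventuallyEq.deriv_eq,
    derivWithin_eq x hx, hv.ode x hx]

theorem derivWithin_zero (hv : IsRadialSolution k f R v) (hk : k ≠ 0) (hf : Continuous f)
    (hR : 0 < R) : derivWithin v (Ico 0 R) 0 = 0 := by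
  let v' := derivWithin v (Ico 0 R)
  let v'' := derivWithin v' (Ico 0 R)
  have hcont : ContinuousOn v (Ico 0 R) := hv.contDiffOn.continuousOn
  have hcont' : ContinuousOn v' (Ico 0 R) := hv.contDiffOn_derivWithin.continuousOn
  have hcont'' : ContinuousOn v'' (Ico 0 R) :=
    hv.contDiffOn_derivWithin.continuousOn_derivWithin (uniqueDiffOn_Ico 0 R) le_rfl
  have ode_mul_self : EqOn (fun x ↦ x • v'' x + k • v' x) (fun x ↦ x • f (v x)) (Ioo 0 R) := by
    intro x hx
    simp only [v'', v', ← hv.derivWithin_ode hx, smul_add, smul_smul, mul_div_cancel₀ k hx.1.ne']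
  have ode_mul_self_Ico :=
    ode_mul_self.of_subset_closure (by fun_prop) (by fun_prop) Ioo_subset_Ico_self
      (by rw [closure_Ioo hR.ne]; exact Ico_subset_Icc_self)
  simpa [hk] using ode_mul_self_Ico (left_mem_Ico.2 hR)

end NormedSpace

variable {E : Type*} [NormedAddCommGroup E] [InnerProductSpace ℝ E]
  {k R : ℝ} {f : E → E} {u v : ℝ → E}

theorem inner_derivWithin_sub_le (hv : IsRadialSolution k f R v) (hu : IsRadialSolution k f R u)
    (hk : 0 ≤ k) {x : ℝ} (hx : x ∈ Ioo 0 R) :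
    ⟪derivWithin v (Ico 0 R) x - derivWithin u (Ico 0 R) x,
      derivWithin (derivWithin v (Ico 0 R)) (Ico 0 R) x -
        derivWithin (derivWithin u (Ico 0 R)) (Ico 0 R) x⟫ ≤
      ‖f (v x) - f (u x)‖ * ‖derivWithin v (Ico 0 R) x - derivWithin u (Ico 0 R) x‖ := by
  set w' := derivWithin v (Ico 0 R) x - derivWithin u (Ico 0 R) x with hw'
  have deriv_w' : derivWithin (derivWithin v (Ico 0 R)) (Ico 0 R) x -
      derivWithin (derivWithin u (Ico 0 R)) (Ico 0 R) x = f (v x) - f (u x) - (k / x) • w' := by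
    rw [← hv.derivWithin_ode hx, ← hu.derivWithin_ode hx, hw', smul_sub]
    abel
  have damping_nonneg : 0 ≤ k / x * ‖w'‖ ^ 2 := by
    have := hx.1
    positivity
  calc ⟪w', derivWithin (derivWithin v (Ico 0 R)) (Ico 0 R) x -
        derivWithin (derivWithin u (Ico 0 R)) (Ico 0 R) x⟫
      = ⟪f (v x) - f (u x), w'⟫ - k / x * ‖w'‖ ^ 2 := by
        rw [deriv_w', inner_sub_right, real_inner_smul_right, real_inner_self_eq_norm_sq,
          real_inner_comm]
    _ ≤ ⟪f (v x) - f (u x), w'⟫ := sub_le_self _ damping_nonneg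
    _ ≤ ‖f (v x) - f (u x)‖ * ‖w'‖ := real_inner_le_norm _ _

theorem eqOn (hv : IsRadialSolution k f R v) (hu : IsRadialSolution k f R u)
    (hk : 0 < k) (hf : LocallyLipschitz f) (h0 : v 0 = u 0) : EqOn v u (Ico 0 R) := by
  intro r hr
  have hsub : Icc 0 r ⊆ Ico 0 R := Icc_subset_Ico_right hr.2
  have hvc : ContinuousOn v (Icc 0 r) := hv.contDiffOn.continuousOn.mono hsub
  have huc : ContinuousOn u (Icc 0 r) := hu.contDiffOn.continuousOn.mono hsub
  obtain ⟨K, hK⟩ : ∃ K, LipschitzOnWith K f (v '' Icc 0 r ∪ u '' Icc 0 r) :=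
    hf.locallyLipschitzOn.exists_lipschitzOnWith_of_compact
      ((isCompact_Icc.image_of_continuousOn hvc).union (isCompact_Icc.image_of_continuousOn huc))
  have hw'0 : derivWithin v (Ico 0 R) 0 - derivWithin u (Ico 0 R) 0 = 0 := by
    have hR : 0 < R := hr.1.trans_lt hr.2
    rw [hv.derivWithin_zero hk.ne' hf.continuous hR, hu.derivWithin_zero hk.ne' hf.continuous hR,
      sub_zero]
  refine sub_eq_zero.1 <| eq_zero_of_inner_deriv_deriv_le (w := v - u) (K := K) (hvc.sub huc)
    ((hv.contDiffOn_derivWithin.sub hu.contDiffOn_derivWithin).continuousOn.mono hsub)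
    (fun x hx ↦ (hv.hasDerivWithinAt (hsub (Ico_subset_Icc_self hx))).sub
      (hu.hasDerivWithinAt (hsub (Ico_subset_Icc_self hx))))
    (fun x hx ↦ (hv.hasDerivWithinAt_derivWithin (hsub (Ico_subset_Icc_self hx))).sub
      (hu.hasDerivWithinAt_derivWithin (hsub (Ico_subset_Icc_self hx))))
    (sub_eq_zero.2 h0) hw'0 (fun x hx ↦ ?_) r (right_mem_Icc.2 hr.1)
  obtain rfl | hx0 := hx.1.eq_or_lt
  · simp [hw'0]
  · have hxr : x ∈ Icc 0 r := Ico_subset_Icc_self hx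
    have f_sub_le : ‖f (v x) - f (u x)‖ ≤ K * ‖v x - u x‖ :=
      hK.norm_sub_le (.inl (mem_image_of_mem v hxr)) (.inr (mem_image_of_mem u hxr))
    calc _ ≤ ‖f (v x) - f (u x)‖ * _ := hv.inner_derivWithin_sub_le hu hk.le ⟨hx0, hx.2.trans hr.2⟩
      _ ≤ K * ‖v x - u x‖ * _ := by gcongr
      _ = _ := mul_assoc _ _ _

end IsRadialSolution

end RadialSolution

section ComparisonFunction

variable {a x R : ℝ}

/-- The explicit solution `v_a` of `v'' + (3 / x) v' = v³ / 4` with `v 0 = a`. It is only meaningful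
for `a² x² < 32`; at a zero of the denominator it takes the junk value `0`. -/
noncomputable def comparisonFunction (a x : ℝ) : ℝ := 32 * a / (32 - a ^ 2 * x ^ 2)

theorem comparisonFunction_zero (a : ℝ) : comparisonFunction a 0 = a := by
  simp [comparisonFunction]

theorem hasDerivAt_comparisonFunction (hx : 32 - a ^ 2 * x ^ 2 ≠ 0) :
    HasDerivAt (comparisonFunction a) (64 * a ^ 3 * x / (32 - a ^ 2 * x ^ 2) ^ 2) x := by
  have := (hasDerivAt_const x (32 * a)).fun_div
    (((hasDerivAt_pow 2 x).const_mul (a ^ 2)).const_sub 32) hx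
  exact this.congr_deriv (by push_cast; ring)

theorem hasDerivAt_deriv_comparisonFunction (hx : 32 - a ^ 2 * x ^ 2 ≠ 0) :
    HasDerivAt (deriv (comparisonFunction a))
      (64 * a ^ 3 / (32 - a ^ 2 * x ^ 2) ^ 2 +
        256 * a ^ 5 * x ^ 2 / (32 - a ^ 2 * x ^ 2) ^ 3) x := by
  have deriv_eventuallyEq : deriv (comparisonFunction a) =ᶠ[nhds x]
      fun y ↦ 64 * a ^ 3 * y / (32 - a ^ 2 * y ^ 2) ^ 2 := by
    have hcont : ContinuousAt (fun y : ℝ ↦ 32 - a ^ 2 * y ^ 2) x := by fun_prop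
    filter_upwards [hcont.eventually_ne hx] with y hy
    exact (hasDerivAt_comparisonFunction hy).deriv
  have := ((hasDerivAt_id' x).const_mul (64 * a ^ 3)).fun_div
    ((((hasDerivAt_pow 2 x).const_mul (a ^ 2)).const_sub 32).fun_pow 2) (pow_ne_zero 2 hx)
  refine (this.congr_deriv ?_).congr_of_eventuallyEq deriv_eventuallyEq
  field_simp
  push_cast
  ring

theorem sq_mul_sq_lt_of_mem_Ico {c : ℝ} (hc : 0 < c) (hR : a ^ 2 * R ^ 2 ≤ c)
    (hx : x ∈ Ico 0 R) : a ^ 2 * x ^ 2 < c := by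
  obtain rfl | ha := eq_or_ne a 0
  · simpa using hc
  · calc a ^ 2 * x ^ 2 < a ^ 2 * R ^ 2 := by
          have := hx.1
          have := hx.2
          gcongr
      _ ≤ c := hR

theorem isRadialSolution_comparisonFunction (hR : a ^ 2 * R ^ 2 ≤ 32) :
    IsRadialSolution 3 (fun y : ℝ ↦ 1 / 4 * y ^ 3) R (comparisonFunction a) where
  contDiffOn :=
    contDiffOn_const.div (by fun_prop) fun _ hx ↦
      (sub_pos.2 (sq_mul_sq_lt_of_mem_Ico (by norm_num) hR hx)).ne'
  ode x hx := by
    have hD : 32 - a ^ 2 * x ^ 2 ≠ 0 :=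
      (sub_pos.2 (sq_mul_sq_lt_of_mem_Ico (by norm_num) hR (Ioo_subset_Ico_self hx))).ne'
    have hx0 : x ≠ 0 := hx.1.ne'
    rw [(hasDerivAt_deriv_comparisonFunction hD).deriv, (hasDerivAt_comparisonFunction hD).deriv,
      comparisonFunction, smul_eq_mul]
    field_simp
    ring

end ComparisonFunction

theorem comparison_function_unique_solution_general (a R : ℝ) (hR : a ^ 2 * R ^ 2 ≤ 32) (v : ℝ → ℝ)
    (hv : ContDiffOn ℝ 2 v (Ico 0 R)) (hv0 : v 0 = a)
    (hode : ∀ x : ℝ, 0 < x → x < R →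
      deriv (deriv v) x + (3 / x) * deriv v x = (1 / 4) * (v x) ^ 3) :
    ∀ x ∈ Ico 0 R, v x = 32 * a / (32 - a ^ 2 * x ^ 2) := by
  have hsol : IsRadialSolution 3 (fun y : ℝ ↦ 1 / 4 * y ^ 3) R v :=
    ⟨hv, fun x hx ↦ hode x hx.1 hx.2⟩
  have hlip : LocallyLipschitz fun y : ℝ ↦ 1 / 4 * y ^ 3 :=
    ContDiff.locallyLipschitz (𝕂 := ℝ) (by fun_prop)
  exact hsol.eqOn (isRadialSolution_comparisonFunction hR) three_pos hlip
    (hv0.trans (comparisonFunction_zero a).symm)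

/-- Uniqueness of the solution of the singular initial value problem
`v'' + (3/x) v' = (1/4) v³`, `v 0 = a`, `v' 0 = 0` on `[0, 4√2/a)`: any twice
continuously differentiable solution coincides with `v_a (x) = 32 a / (32 - a² x²)`. -/
theorem comparison_function_unique_solution (a : ℝ) (ha : 0 < a) (v : ℝ → ℝ)
    (hv : ContDiffOn ℝ 2 v (Set.Ico (0 : ℝ) (4 * Real.sqrt 2 / a)))
    (hv0 : v 0 = a) (hv'0 : deriv v 0 = 0)
    (hode : ∀ x : ℝ, 0 < x → x < 4 * Real.sqrt 2 / a →
      deriv (deriv v) x + (3 / x) * deriv v x = (1 / 4) * (v x) ^ 3) :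
    ∀ x ∈ Set.Ico (0 : ℝ) (4 * Real.sqrt 2 / a),
      v x = 32 * a / (32 - a ^ 2 * x ^ 2) :=
  have sq_mul_sq_le : a ^ 2 * (4 * √2 / a) ^ 2 ≤ 32 := by field_simp; norm_num
  comparison_function_unique_solution_general a _ sq_mul_sq_le v hv hv0 hode
end

section
/- Let E be a finite-dimensional real inner product space and let f : E → ℝ be a twice continuously differentiable function with f(x) ≥ 0 for all x, satisfying f(x)·Δf(x) ≥ (1/2)·‖∇f(x)‖² + (1/2)·f(x)³ for all x ∈ E. Then Δf(x) ≥ 0 for all x ∈ E. -/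
open scoped BigOperators

/-- The Laplacian of `f : E → ℝ` at `x`: the trace of the Hessian of `f` at `x`,
computed with respect to an orthonormal basis of `E`. -/
noncomputable def laplacian {E : Type*} [NormedAddCommGroup E]
    [InnerProductSpace ℝ E] [FiniteDimensional ℝ E] (f : E → ℝ) (x : E) : ℝ :=
  ∑ i, iteratedFDeriv ℝ 2 f x
    ![(stdOrthonormalBasis ℝ E) i, (stdOrthonormalBasis ℝ E) i]

open scoped Topology

theorem deriv_deriv_nonneg_of_isLocalMin {g : ℝ → ℝ} {a : ℝ} (hmin : IsLocalMin g a)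
    (hg : ContinuousAt g a) : 0 ≤ deriv (deriv g) a := by
  by_contra! hneg
  have hmax : IsLocalMax g a := isLocalMax_of_deriv_deriv_neg hneg hmin.deriv_eq_zero hg
  have hconst : g =ᶠ[𝓝 a] fun _ ↦ g a := by
    filter_upwards [hmin, hmax] with t hle hge using le_antisymm hge hle
  have hzero : deriv (deriv g) a = 0 := by simpa using hconst.deriv.deriv_eq
  exact hneg.ne hzero

theorem iteratedDeriv_comp_add_smul {𝕜 E F : Type*} [NontriviallyNormedField 𝕜]
    [NormedAddCommGroup E] [NormedSpace 𝕜 E] [NormedAddCommGroup F] [NormedSpace 𝕜 F]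
    {f : E → F} {x v : E} {n : ℕ} {t : 𝕜} (hf : ContDiffAt 𝕜 n f (x + t • v)) :
    iteratedDeriv n (fun s : 𝕜 ↦ f (x + s • v)) t =
      iteratedFDeriv 𝕜 n f (x + t • v) (fun _ ↦ v) := by
  induction n generalizing t with
  | zero => simp
  | succ n ih =>
    have hline : ContinuousAt (fun s : 𝕜 ↦ x + s • v) t := by fun_prop
    have hnear : ∀ᶠ s in 𝓝 t, ContDiffAt 𝕜 n f (x + s • v) :=
      hline.eventually ((hf.of_le (by norm_cast; lia)).eventually (by simp))
    have hlower : iteratedDeriv n (fun s : 𝕜 ↦ f (x + s • v)) =ᶠ[𝓝 t]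
        fun s ↦ iteratedFDeriv 𝕜 n f (x + s • v) (fun _ ↦ v) :=
      hnear.mono fun _ hs ↦ ih hs
    rw [iteratedDeriv_succ, hlower.deriv_eq]
    exact hf.deriv_fderiv_add_smul

theorem iteratedFDeriv_two_nonneg_of_isLocalMin {E : Type*} [NormedAddCommGroup E]
    [NormedSpace ℝ E] {f : E → ℝ} {p : E} (hmin : IsLocalMin f p) (hf : ContDiffAt ℝ 2 f p)
    (v : E) : 0 ≤ iteratedFDeriv ℝ 2 f p ![v, v] := by
  have hline : ContinuousAt (fun t : ℝ ↦ p + t • v) 0 := by fun_prop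
  have hp : p + (0 : ℝ) • v = p := by simp
  have hmin_line : IsLocalMin (fun t : ℝ ↦ f (p + t • v)) 0 :=
    IsMinFilter.comp_tendsto (g := fun t : ℝ ↦ p + t • v) (by rwa [hp]) (hp ▸ hline.tendsto)
  have hcont_line : ContinuousAt (fun t : ℝ ↦ f (p + t • v)) 0 :=
    hf.continuousAt.comp_of_eq hline hp
  calc
    0 ≤ deriv (deriv fun t : ℝ ↦ f (p + t • v)) 0 :=
      deriv_deriv_nonneg_of_isLocalMin hmin_line hcont_line
    _ = iteratedDeriv 2 (fun t : ℝ ↦ f (p + t • v)) 0 := by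
      rw [iteratedDeriv_succ, iteratedDeriv_one]
    _ = iteratedFDeriv ℝ 2 f p (fun _ ↦ v) := by
      rw [iteratedDeriv_comp_add_smul (by rwa [hp]), hp]
    _ = iteratedFDeriv ℝ 2 f p ![v, v] := by
      congr 1
      ext i
      fin_cases i <;> rfl

section Laplacian

variable {E : Type*} [NormedAddCommGroup E] [InnerProductSpace ℝ E] [FiniteDimensional ℝ E]
  {f : E → ℝ} {x : E}

theorem laplacian_nonneg_of_isLocalMin (hmin : IsLocalMin f x) (hf : ContDiffAt ℝ 2 f x) :
    0 ≤ laplacian f x :=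
  Finset.sum_nonneg fun _ _ ↦ iteratedFDeriv_two_nonneg_of_isLocalMin hmin hf _

theorem laplacian_nonneg_of_differential_inequality_general (hf : ContDiffAt ℝ 2 f x)
    (hpos : ∀ᶠ y in 𝓝 x, 0 ≤ f y) (hmul : 0 ≤ f x * laplacian f x) :
    0 ≤ laplacian f x := by
  rcases hpos.self_of_nhds.eq_or_lt with hzero | hfpos
  · have hmin : IsLocalMin f x := by simpa only [IsLocalMin, IsMinFilter, ← hzero] using hpos
    exact laplacian_nonneg_of_isLocalMin hmin hf
  · exact nonneg_of_mul_nonneg_right hmul hfpos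

end Laplacian

/-- If `f ≥ 0` is `C²` on a finite-dimensional real inner product space
and satisfies `f Δf ≥ (1/2) ‖∇f‖² + (1/2) f³` everywhere, then `Δf ≥ 0` everywhere. -/
theorem laplacian_nonneg_of_differential_inequality
    {E : Type*} [NormedAddCommGroup E] [InnerProductSpace ℝ E]
    [FiniteDimensional ℝ E] (f : E → ℝ) (hf : ContDiff ℝ 2 f)
    (hpos : ∀ x, 0 ≤ f x)
    (hineq : ∀ x, f x * laplacian f x ≥
      (1 / 2) * ‖gradient f x‖ ^ 2 + (1 / 2) * f x ^ 3) :
    ∀ x, 0 ≤ laplacian f x := by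
  intro x
  have hrhs : 0 ≤ (1 / 2) * ‖gradient f x‖ ^ 2 + (1 / 2) * f x ^ 3 := by
    have := hpos x
    positivity
  exact laplacian_nonneg_of_differential_inequality_general hf.contDiffAt
    (.of_forall hpos) (hrhs.trans (hineq x))
end

section
/- Let f : EuclideanSpace ℝ (Fin 4) → ℝ be a twice continuously differentiable function with f(x) ≥ 0 for all x, satisfying f(x)·Δf(x) ≥ (1/2)·‖∇f(x)‖² + (1/2)·f(x)³ for all x. Then f is identically zero. -/
open scoped BigOperators

/-!
The barriers `w = (R² - |y - p|²)^(-α)` with `α = 2 / (q - 1)` are supersolutions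
`Δ w ≤ C R² w ^ q` that blow up on the boundary of the ball. The least multiple `m w` lying above a
solution of `Δ f ≥ c f ^ q` touches it at an interior point, where the Hessian of `f - m w` is
nonpositive, so that `c m ^ (q - 1) ≤ C R²`. At the centre this reads
`c f(p) ^ (q - 1) R² ≤ C`, and `R → ∞` leaves no room for `f(p) > 0`.
-/

open Filter Metric Module Topology
open scoped InnerProductSpace Laplacian

theorem deriv_deriv_nonpos_of_isLocalMax {f : ℝ → ℝ} {a : ℝ} (hmax : IsLocalMax f a)
    (hf : ContinuousAt f a) : deriv (deriv f) a ≤ 0 := by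
  by_contra! hpos
  have hmin : IsLocalMin f a := isLocalMin_of_deriv_deriv_pos hpos hmax.deriv_eq_zero hf
  have hconst : f =ᶠ[𝓝 a] fun _ ↦ f a := hmax.and hmin |>.mono fun _ h ↦ le_antisymm h.1 h.2
  have hzero : deriv (deriv f) a = 0 := by simpa using hconst.deriv.deriv_eq
  exact hpos.ne' hzero

theorem iteratedFDeriv_two_eq_deriv_deriv {E F : Type*} [NormedAddCommGroup E] [NormedSpace ℝ E]
    [NormedAddCommGroup F] [NormedSpace ℝ F] {f : E → F} {x : E} (hf : ContDiffAt ℝ 2 f x)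
    (v : E) : iteratedFDeriv ℝ 2 f x ![v, v] = deriv (deriv fun t : ℝ ↦ f (x + t • v)) 0 := by
  have hline : Tendsto (fun t : ℝ ↦ x + t • v) (𝓝 0) (𝓝 x) :=
    Continuous.tendsto' (by fun_prop) _ _ (by simp)
  have hderiv : deriv (fun t : ℝ ↦ f (x + t • v)) =ᶠ[𝓝 0]
      fun t ↦ iteratedFDeriv ℝ 1 f (x + t • v) fun _ ↦ v := by
    filter_upwards [hline.eventually (hf.eventually (by simp))] with t ht
    rw [(ht.differentiableAt two_ne_zero).deriv_comp_add_smul, iteratedFDeriv_one_apply]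
  have hf₀ : ContDiffAt ℝ (1 + 1) f (x + (0 : ℝ) • v) := by simpa [one_add_one_eq_two] using hf
  rw [hderiv.deriv_eq, ContDiffAt.deriv_fderiv_add_smul (n := 1) (mod_cast hf₀), zero_smul,
    add_zero]
  congr 1
  ext i
  fin_cases i <;> rfl

theorem iteratedFDeriv_two_nonpos_of_isLocalMax {E : Type*} [NormedAddCommGroup E]
    [NormedSpace ℝ E] {f : E → ℝ} {x : E} (hmax : IsLocalMax f x) (hf : ContDiffAt ℝ 2 f x)
    (v : E) : iteratedFDeriv ℝ 2 f x ![v, v] ≤ 0 := by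
  have hline : ContinuousAt (fun t : ℝ ↦ x + t • v) 0 := by fun_prop
  have hx : x + (0 : ℝ) • v = x := by simp
  rw [iteratedFDeriv_two_eq_deriv_deriv hf]
  refine deriv_deriv_nonpos_of_isLocalMax ?_ (hf.continuousAt.comp_of_eq hline hx)
  exact IsLocalMax.comp_continuous (g := fun t : ℝ ↦ x + t • v) (by rwa [hx]) hline

theorem iteratedFDeriv_two_comp {E : Type*} [NormedAddCommGroup E] [NormedSpace ℝ E]
    {g g' : ℝ → ℝ} {g'' : ℝ} {u : E → ℝ} {x : E}
    (hg : ∀ᶠ s in 𝓝 (u x), HasDerivAt g (g' s) s) (hg' : HasDerivAt g' g'' (u x))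
    (hu : ContDiffAt ℝ 2 u x) (v : E) :
    iteratedFDeriv ℝ 2 (g ∘ u) x ![v, v] =
      g'' * fderiv ℝ u x v ^ 2 + g' (u x) * iteratedFDeriv ℝ 2 u x ![v, v] := by
  have hfderiv : fderiv ℝ (g ∘ u) =ᶠ[𝓝 x] fun y ↦ g' (u y) • fderiv ℝ u y := by
    filter_upwards [hu.continuousAt.eventually hg, hu.eventually (by simp)] with y hgy huy
    exact (hgy.comp_hasFDerivAt y (huy.differentiableAt two_ne_zero).hasFDerivAt).fderiv
  have hu' : HasFDerivAt u (fderiv ℝ u x) x := (hu.differentiableAt two_ne_zero).hasFDerivAt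
  have hu'' : HasFDerivAt (fderiv ℝ u) (fderiv ℝ (fderiv ℝ u) x) x :=
    ((hu.fderiv_right (m := 1) le_rfl).differentiableAt one_ne_zero).hasFDerivAt
  have hproduct : fderiv ℝ (fun y ↦ g' (u y) • fderiv ℝ u y) x =
      g' (u x) • fderiv ℝ (fderiv ℝ u) x + (g'' • fderiv ℝ u x).smulRight (fderiv ℝ u x) :=
    ((hg'.comp_hasFDerivAt x hu').smul hu'').fderiv
  simp only [iteratedFDeriv_two_apply, hfderiv.fderiv_eq, hproduct]
  simp only [Fin.isValue, Matrix.cons_val_zero, Matrix.cons_val_one, Matrix.cons_val_fin_one,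
    add_apply, smul_apply, ContinuousLinearMap.smulRight_apply, smul_eq_mul]
  ring

theorem iteratedFDeriv_two_norm_sub_sq {E : Type*} [NormedAddCommGroup E] [InnerProductSpace ℝ E]
    (p x v : E) : iteratedFDeriv ℝ 2 (fun y ↦ ‖y - p‖ ^ 2) x ![v, v] = 2 * ‖v‖ ^ 2 := by
  have hline (t : ℝ) : HasDerivAt (fun t : ℝ ↦ x + t • v - p) v t := by
    simpa using (((hasDerivAt_id t).smul_const v).const_add x).sub_const p
  have hderiv : deriv (fun t : ℝ ↦ ‖x + t • v - p‖ ^ 2) = fun t ↦ 2 * ⟪x + t • v - p, v⟫_ℝ :=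
    funext fun t ↦ (hline t).norm_sq.deriv
  have hderiv' : HasDerivAt (fun t : ℝ ↦ 2 * ⟪x + t • v - p, v⟫_ℝ) (2 * ‖v‖ ^ 2) 0 := by
    simpa using ((hline 0).inner ℝ (hasDerivAt_const 0 v)).const_mul 2
  have hsmooth : ContDiffAt ℝ 2 (fun y ↦ ‖y - p‖ ^ 2) x :=
    (contDiffAt_id.sub contDiffAt_const).norm_sq ℝ
  rw [iteratedFDeriv_two_eq_deriv_deriv hsmooth, hderiv, hderiv'.deriv]

section Laplacian

variable {E : Type*} [NormedAddCommGroup E] [InnerProductSpace ℝ E] [FiniteDimensional ℝ E]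

theorem laplacian_eq_mathlib_laplacian (f : E → ℝ) : laplacian f = Δ f :=
  (InnerProductSpace.laplacian_eq_iteratedFDeriv_stdOrthonormalBasis f).symm

theorem laplacian_nonpos_of_isLocalMax {f : E → ℝ} {x : E} (hmax : IsLocalMax f x)
    (hf : ContDiffAt ℝ 2 f x) : Δ f x ≤ 0 := by
  rw [InnerProductSpace.laplacian_eq_iteratedFDeriv_stdOrthonormalBasis]
  exact Finset.sum_nonpos fun i _ ↦ iteratedFDeriv_two_nonpos_of_isLocalMax hmax hf _

theorem laplacian_le_of_eventuallyLE {f g : E → ℝ} {x : E} (hf : ContDiffAt ℝ 2 f x)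
    (hg : ContDiffAt ℝ 2 g x) (hle : f ≤ᶠ[𝓝 x] g) (heq : f x = g x) : Δ f x ≤ Δ g x := by
  have hmax : IsLocalMax (f - g) x := by
    filter_upwards [hle] with y hy
    simpa [heq] using hy
  simpa [hf.laplacian_sub hg] using laplacian_nonpos_of_isLocalMax hmax (hf.sub hg)

theorem laplacian_comp {g g' : ℝ → ℝ} {g'' : ℝ} {u : E → ℝ} {x : E}
    (hg : ∀ᶠ s in 𝓝 (u x), HasDerivAt g (g' s) s) (hg' : HasDerivAt g' g'' (u x))
    (hu : ContDiffAt ℝ 2 u x) :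
    Δ (g ∘ u) x = g'' * ‖fderiv ℝ u x‖ ^ 2 + g' (u x) * Δ u x := by
  simp only [InnerProductSpace.laplacian_eq_iteratedFDeriv_stdOrthonormalBasis,
    iteratedFDeriv_two_comp hg hg' hu, Finset.sum_add_distrib, ← Finset.mul_sum,
    (stdOrthonormalBasis ℝ E).norm_dual]

theorem laplacian_rpow_const {u : E → ℝ} {x : E} (hu : ContDiffAt ℝ 2 u x) (hx : u x ≠ 0)
    (r : ℝ) : Δ (fun y ↦ u y ^ r) x =
      r * (r - 1) * u x ^ (r - 2) * ‖fderiv ℝ u x‖ ^ 2 + r * u x ^ (r - 1) * Δ u x := by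
  have hderiv : ∀ᶠ s in 𝓝 (u x), HasDerivAt (fun s : ℝ ↦ s ^ r) (r * s ^ (r - 1)) s :=
    (eventually_ne_nhds hx).mono fun s hs ↦ Real.hasDerivAt_rpow_const (.inl hs)
  have hderiv' : HasDerivAt (fun s : ℝ ↦ r * s ^ (r - 1)) (r * (r - 1) * u x ^ (r - 2)) (u x) :=
    ((Real.hasDerivAt_rpow_const (.inl hx)).const_mul r).congr_deriv (by ring_nf)
  exact laplacian_comp (g := fun s ↦ s ^ r) (g' := fun s ↦ r * s ^ (r - 1)) hderiv hderiv' hu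

theorem laplacian_norm_sub_sq (p x : E) : Δ (fun y ↦ ‖y - p‖ ^ 2) x = 2 * finrank ℝ E := by
  simp [InnerProductSpace.laplacian_eq_iteratedFDeriv_stdOrthonormalBasis,
    iteratedFDeriv_two_norm_sub_sq, mul_comm]

end Laplacian

section CalabiBarrier

variable {E : Type*} [NormedAddCommGroup E]

/-- The standard defining function `R² - |y - p|²` of the ball of radius `R` about `p`. -/
def ballDefiningFun (p : E) (R : ℝ) (y : E) : ℝ :=
  R ^ 2 - ‖y - p‖ ^ 2

theorem ballDefiningFun_pos {p x : E} {R : ℝ} (hx : x ∈ ball p R) :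
    0 < ballDefiningFun p R x := by
  rw [mem_ball_iff_norm] at hx
  exact sub_pos.mpr (by gcongr)

theorem ballDefiningFun_self (p : E) (R : ℝ) : ballDefiningFun p R p = R ^ 2 := by
  simp [ballDefiningFun]

/-- Calabi's barrier `(R² - |y - p|²)^(-α)`, which blows up on the boundary of the ball of radius
`R` about `p`. Outside the open ball its values are meaningless. -/
noncomputable def calabiBarrier (p : E) (R α : ℝ) (y : E) : ℝ :=
  ballDefiningFun p R y ^ (-α)

theorem calabiBarrier_pos {p x : E} {R : ℝ} (hx : x ∈ ball p R) (α : ℝ) :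
    0 < calabiBarrier p R α x :=
  Real.rpow_pos_of_pos (ballDefiningFun_pos hx) _

theorem calabiBarrier_self_rpow {R α q : ℝ} (p : E) (hR : R ≠ 0) (hαq : α * (q - 1) = 2) :
    calabiBarrier p R α p ^ (q - 1) * R ^ 4 = 1 := by
  have hRsq : 0 < R ^ 2 := by positivity
  rw [calabiBarrier, ballDefiningFun_self, ← Real.rpow_mul hRsq.le, neg_mul, hαq,
    Real.rpow_neg hRsq.le, Real.rpow_two]
  field_simp

variable [InnerProductSpace ℝ E]

theorem contDiff_ballDefiningFun (p : E) (R : ℝ) : ContDiff ℝ 2 (ballDefiningFun p R) :=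
  contDiff_const.sub ((contDiff_id.sub contDiff_const).norm_sq ℝ)

theorem norm_fderiv_ballDefiningFun (p : E) (R : ℝ) (x : E) :
    ‖fderiv ℝ (ballDefiningFun p R) x‖ = 2 * ‖x - p‖ := by
  unfold ballDefiningFun
  rw [fderiv_const_sub, norm_neg, fderiv_comp_sub (f := fun z : E ↦ ‖z‖ ^ 2), fderiv_norm_sq_apply,
    RCLike.norm_nsmul ℝ, innerSL_apply_norm, nsmul_eq_mul, Nat.cast_two]

theorem laplacian_ballDefiningFun [FiniteDimensional ℝ E] (p : E) (R : ℝ) (x : E) :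
    Δ (ballDefiningFun p R) x = -(2 * finrank ℝ E) := by
  have hsub : Δ (ballDefiningFun p R) x = Δ (fun _ : E ↦ R ^ 2) x - Δ (fun y ↦ ‖y - p‖ ^ 2) x :=
    contDiffAt_const.laplacian_sub ((contDiffAt_id.sub contDiffAt_const).norm_sq ℝ)
  rw [hsub, InnerProductSpace.laplacian_const, laplacian_norm_sub_sq, Pi.zero_apply, zero_sub]

theorem contDiffAt_calabiBarrier {p x : E} {R : ℝ} (hx : x ∈ ball p R) (α : ℝ) :
    ContDiffAt ℝ 2 (calabiBarrier p R α) x :=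
  (contDiff_ballDefiningFun p R).contDiffAt.rpow_const_of_ne (ballDefiningFun_pos hx).ne'

theorem laplacian_calabiBarrier_le [FiniteDimensional ℝ E] {p x : E} {R α q : ℝ}
    (hx : x ∈ ball p R) (hα : 0 ≤ α) (hαq : α * (q - 1) = 2) :
    Δ (calabiBarrier p R α) x ≤
      2 * α * (2 * (α + 1) + finrank ℝ E) * R ^ 2 * calabiBarrier p R α x ^ q := by
  set φ := ballDefiningFun p R x with hφ_def
  have hφ : 0 < φ := ballDefiningFun_pos hx
  have hφR : φ ≤ R ^ 2 := sub_le_self _ (sq_nonneg _)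
  have hdist : ‖x - p‖ ^ 2 ≤ R ^ 2 := sub_nonneg.mp hφ.le
  have hpow : calabiBarrier p R α x ^ q = φ ^ (-α - 2) := by
    rw [calabiBarrier, ← Real.rpow_mul hφ.le]
    congr 1
    linarith
  have hpow' : φ ^ (-α - 1) = φ ^ (-α - 2) * φ := by
    rw [← Real.rpow_add_one hφ.ne']
    ring_nf
  calc Δ (calabiBarrier p R α) x
      = φ ^ (-α - 2) *
          (4 * α * (α + 1) * ‖x - p‖ ^ 2 + 2 * α * finrank ℝ E * φ) := by
        unfold calabiBarrier
        rw [laplacian_rpow_const (contDiff_ballDefiningFun p R).contDiffAt hφ.ne',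
          norm_fderiv_ballDefiningFun, laplacian_ballDefiningFun, ← hφ_def, hpow']
        ring
    _ ≤ φ ^ (-α - 2) * (4 * α * (α + 1) * R ^ 2 + 2 * α * finrank ℝ E * R ^ 2) := by
        gcongr
    _ = 2 * α * (2 * (α + 1) + finrank ℝ E) * R ^ 2 * calabiBarrier p R α x ^ q := by
        rw [hpow]
        ring

theorem exists_le_const_mul_calabiBarrier [FiniteDimensional ℝ E] {f : E → ℝ} {p : E} {R α : ℝ}
    (hR : 0 < R) (hα : 0 < α) (hf : ContinuousOn f (closedBall p R)) (hp : 0 < f p) :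
    ∃ x ∈ ball p R, ∃ m > 0, f x = m * calabiBarrier p R α x ∧
      ∀ y ∈ ball p R, f y ≤ m * calabiBarrier p R α y := by
  have hcont : ContinuousOn (fun y ↦ f y * ballDefiningFun p R y ^ α) (closedBall p R) :=
    hf.mul ((contDiff_ballDefiningFun p R).continuous.rpow_const fun _ ↦ .inr hα.le).continuousOn
  have hpR : p ∈ closedBall p R := mem_closedBall_self hR.le
  obtain ⟨x, hxR, hmax⟩ := (isCompact_closedBall p R).exists_isMaxOn ⟨p, hpR⟩ hcont
  set m := f x * ballDefiningFun p R x ^ α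
  have hm : 0 < m := by
    refine lt_of_lt_of_le ?_ (hmax hpR)
    have := ballDefiningFun_pos (mem_ball_self (x := p) hR)
    positivity
  have hx : x ∈ ball p R := by
    refine lt_of_le_of_ne (mem_closedBall.mp hxR) fun hdist ↦ hm.ne' ?_
    simp [m, ballDefiningFun, ← dist_eq_norm, hdist, hα.ne']
  have hcancel {y : E} (hy : y ∈ ball p R) :
      f y * ballDefiningFun p R y ^ α * calabiBarrier p R α y = f y := by
    rw [calabiBarrier, mul_assoc, ← Real.rpow_add (ballDefiningFun_pos hy), add_neg_cancel,
      Real.rpow_zero, mul_one]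
  refine ⟨x, hx, m, hm, (hcancel hx).symm, fun y hy ↦ ?_⟩
  rw [← hcancel hy]
  exact mul_le_mul_of_nonneg_right (hmax (ball_subset_closedBall hy)) (calabiBarrier_pos hy α).le

end CalabiBarrier

section KellerOsserman

variable {E : Type*} [NormedAddCommGroup E] [InnerProductSpace ℝ E] [FiniteDimensional ℝ E]

theorem mul_rpow_le_of_eventuallyLE_smul {f w : E → ℝ} {x : E} {c K m q : ℝ}
    (hf : ContDiffAt ℝ 2 f x) (hw : ContDiffAt ℝ 2 w x) (hm : 0 < m) (hwx : 0 < w x)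
    (hle : f ≤ᶠ[𝓝 x] m • w) (heq : f x = m * w x) (hΔf : c * f x ^ q ≤ Δ f x)
    (hΔw : Δ w x ≤ K * w x ^ q) : c * m ^ (q - 1) ≤ K := by
  refine le_of_mul_le_mul_right ?_ (mul_pos hm (Real.rpow_pos_of_pos hwx q))
  calc c * m ^ (q - 1) * (m * w x ^ q)
      = c * f x ^ q := by
        rw [heq, Real.mul_rpow hm.le hwx.le, Real.rpow_sub_one hm.ne']
        field_simp
    _ ≤ Δ f x := hΔf
    _ ≤ Δ (m • w) x := laplacian_le_of_eventuallyLE hf (hw.const_smul m) hle heq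
    _ = m * Δ w x := InnerProductSpace.laplacian_smul m hw
    _ ≤ m * (K * w x ^ q) := by gcongr
    _ = K * (m * w x ^ q) := by ring

theorem keller_osserman_estimate {f : E → ℝ} {p : E} {R α c q : ℝ} (hR : 0 < R) (hα : 0 < α)
    (hαq : α * (q - 1) = 2) (hc : 0 ≤ c) (hcont : ContinuousOn f (closedBall p R))
    (hdiff : ∀ x ∈ ball p R, ContDiffAt ℝ 2 f x)
    (hΔ : ∀ x ∈ ball p R, 0 < f x → c * f x ^ q ≤ Δ f x) (hp : 0 < f p) :
    c * f p ^ (q - 1) * R ^ 2 ≤ 2 * α * (2 * (α + 1) + finrank ℝ E) := by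
  set C := 2 * α * (2 * (α + 1) + finrank ℝ E)
  set w := calabiBarrier p R α
  have hq : 0 < q - 1 := pos_of_mul_pos_right (hαq ▸ two_pos) hα.le
  have hpR : p ∈ ball p R := mem_ball_self hR
  obtain ⟨x, hx, m, hm, heq, hle⟩ := exists_le_const_mul_calabiBarrier hR hα hcont hp
  have hwx : 0 < w x := calabiBarrier_pos hx α
  have hcontact : c * m ^ (q - 1) ≤ C * R ^ 2 :=
    mul_rpow_le_of_eventuallyLE_smul (hdiff x hx) (contDiffAt_calabiBarrier hx α) hm hwx
      (eventually_of_mem (isOpen_ball.mem_nhds hx) hle) heq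
      (hΔ x hx (heq ▸ mul_pos hm hwx)) (laplacian_calabiBarrier_le hx hα.le hαq)
  have hcenter : f p ^ (q - 1) * R ^ 4 ≤ m ^ (q - 1) := by
    calc f p ^ (q - 1) * R ^ 4
        ≤ (m * w p) ^ (q - 1) * R ^ 4 := by
          gcongr
          exact hle p hpR
      _ = m ^ (q - 1) := by
          rw [Real.mul_rpow hm.le (calabiBarrier_pos hpR α).le, mul_assoc,
            calabiBarrier_self_rpow p hR.ne' hαq, mul_one]
  refine le_of_mul_le_mul_right ?_ (pow_pos hR 2)
  calc c * f p ^ (q - 1) * R ^ 2 * R ^ 2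
      = c * (f p ^ (q - 1) * R ^ 4) := by ring
    _ ≤ c * m ^ (q - 1) := by gcongr
    _ ≤ C * R ^ 2 := hcontact

theorem liouville_euclidean_four_general {f : E → ℝ} (hf : ContDiff ℝ 2 f) {c q : ℝ} (hc : 0 < c)
    (hq : 1 < q) (hΔ : ∀ x, 0 < f x → c * f x ^ q ≤ laplacian f x) (x : E) : f x ≤ 0 := by
  by_contra! hx
  have hq' : 0 < q - 1 := sub_pos.mpr hq
  have hunbounded : Tendsto (fun R : ℝ ↦ c * f x ^ (q - 1) * R ^ 2) atTop atTop :=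
    (tendsto_pow_atTop two_ne_zero).const_mul_atTop (by positivity)
  obtain ⟨R, hR, hlarge⟩ := ((eventually_gt_atTop 0).and
    (hunbounded.eventually_gt_atTop
      (2 * (2 / (q - 1)) * (2 * (2 / (q - 1) + 1) + finrank ℝ E)))).exists
  rw [laplacian_eq_mathlib_laplacian] at hΔ
  exact hlarge.not_ge <| keller_osserman_estimate hR (by positivity) (div_mul_cancel₀ _ hq'.ne')
    hc.le hf.continuous.continuousOn (fun _ _ ↦ hf.contDiffAt) (fun y _ ↦ hΔ y) hx

end KellerOsserman

/-- (Calabi-type Liouville lemma on Euclidean `ℝ⁴`.) A nonnegative `C²`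
function on 4-dimensional Euclidean space satisfying
`f Δf ≥ (1/2) ‖∇f‖² + (1/2) f³` everywhere is identically zero. -/
theorem liouville_euclidean_four
    (f : EuclideanSpace ℝ (Fin 4) → ℝ) (hf : ContDiff ℝ 2 f)
    (hpos : ∀ x, 0 ≤ f x)
    (hineq : ∀ x, f x * laplacian f x ≥
      (1 / 2) * ‖gradient f x‖ ^ 2 + (1 / 2) * f x ^ 3) :
    ∀ x, f x = 0 := by
  refine fun x ↦
    (liouville_euclidean_four_general hf one_half_pos one_lt_two ?_ x).antisymm (hpos x)
  exact fun y hy ↦ le_of_mul_le_mul_left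
    (by rw [Real.rpow_two]; linarith [hineq y, sq_nonneg ‖gradient f y‖]) hy
end

section
/- Fix a real number a > 0 and define V_a : EuclideanSpace ℝ (Fin 4) → ℝ by V_a(x) = 32a / (32 − a²·‖x‖²). Then for every x with ‖x‖ < 4√2/a, the Laplacian of V_a at x equals (1/4)·V_a(x)³. -/
open scoped BigOperators

/-!
In the variable `s = ‖x‖²`, which unlike `‖x‖` is smooth at the origin, a radial function
`φ (‖x‖²)` on an `n`-dimensional space has Hessian `2 φ'(s) ⟪u, v⟫ + 4 φ''(s) ⟪x, u⟫ ⟪x, v⟫`,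
whose trace is `2 n φ'(s) + 4 s φ''(s)`. For `φ(s) = 32 a / (32 - a² s)` and `n = 4` the trace is
`256 a³ ((32 - a² s) + a² s) / (32 - a² s)³`; the terms in `s` cancel, leaving a multiple of `φ³`.
-/

open scoped Topology

theorem hasDerivAt_const_div_sub_mul_pow {𝕜 : Type*} [NontriviallyNormedField 𝕜]
    (c b k : 𝕜) (n : ℕ) {s : 𝕜} (hs : b - k * s ≠ 0) :
    HasDerivAt (fun t => c / (b - k * t) ^ n) (n * k * c / (b - k * s) ^ (n + 1)) s := by
  have h_base : HasDerivAt (fun t => b - k * t) (-k) s := by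
    simpa using ((hasDerivAt_id s).const_mul k).const_sub b
  refine ((hasDerivAt_const s c).fun_div (h_base.fun_pow n) (pow_ne_zero n hs)).congr_deriv ?_
  cases n with
  | zero => simp
  | succ m =>
    rw [Nat.add_sub_cancel]
    field_simp
    ring

section RadialFunctions

variable {E : Type*} [NormedAddCommGroup E] [InnerProductSpace ℝ E]
  {φ φ' : ℝ → ℝ} {φ'' : ℝ} {x : E}

theorem hasFDerivAt_comp_norm_sq {d : ℝ} (hφ : HasDerivAt φ d (‖x‖ ^ 2)) :
    HasFDerivAt (fun y : E => φ (‖y‖ ^ 2)) ((2 * d) • innerSL ℝ x) x := by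
  refine (hφ.comp_hasFDerivAt x (hasStrictFDerivAt_norm_sq x).hasFDerivAt).congr_fderiv ?_
  rw [← Nat.cast_smul_eq_nsmul ℝ, smul_smul, Nat.cast_ofNat, mul_comm]

theorem iteratedFDeriv_two_comp_norm_sq
    (hφ : ∀ᶠ s in 𝓝 (‖x‖ ^ 2), HasDerivAt φ (φ' s) s) (hφ' : HasDerivAt φ' φ'' (‖x‖ ^ 2))
    (u v : E) :
    iteratedFDeriv ℝ 2 (fun y : E => φ (‖y‖ ^ 2)) x ![u, v] =
      2 * φ' (‖x‖ ^ 2) * inner ℝ u v + 4 * φ'' * (inner ℝ x u * inner ℝ x v) := by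
  have h_gradient : fderiv ℝ (fun y : E => φ (‖y‖ ^ 2)) =ᶠ[𝓝 x]
      fun y => (2 * φ' (‖y‖ ^ 2)) • innerSL ℝ y := by
    have h_cont : ContinuousAt (fun y : E => ‖y‖ ^ 2) x := by fun_prop
    filter_upwards [h_cont.eventually hφ] with y hy
    exact (hasFDerivAt_comp_norm_sq hy).fderiv
  have h_hessian := ((hasFDerivAt_comp_norm_sq hφ').const_mul 2).fun_smul
    (innerSL ℝ (E := E)).hasFDerivAt
  -- Over `ℝ` the conjugate-linear `innerSL` serves as a linear map only up to unfolding,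
  -- so `innerSL_apply_apply` does not match syntactically.
  have h_innerSL (y z : E) : (innerSL ℝ : E →L[ℝ] E →L[ℝ] ℝ) y z = inner ℝ y z := rfl
  rw [iteratedFDeriv_two_apply, h_gradient.fderiv_eq, h_hessian.fderiv]
  simp only [Matrix.cons_val_zero, Matrix.cons_val_one, add_apply, smul_apply,
    ContinuousLinearMap.smulRight_apply, h_innerSL, smul_eq_mul]
  ring

theorem laplacian_comp_norm_sq [FiniteDimensional ℝ E]
    (hφ : ∀ᶠ s in 𝓝 (‖x‖ ^ 2), HasDerivAt φ (φ' s) s) (hφ' : HasDerivAt φ' φ'' (‖x‖ ^ 2)) :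
    laplacian (fun y : E => φ (‖y‖ ^ 2)) x =
      2 * Module.finrank ℝ E * φ' (‖x‖ ^ 2) + 4 * ‖x‖ ^ 2 * φ'' := by
  simp only [laplacian, iteratedFDeriv_two_comp_norm_sq hφ hφ', ← pow_two,
    Finset.sum_add_distrib, ← Finset.mul_sum, OrthonormalBasis.sum_sq_inner_left,
    OrthonormalBasis.inner_eq_one, Finset.sum_const, Finset.card_univ, Fintype.card_fin,
    nsmul_eq_mul]
  ring

end RadialFunctions

theorem barrier_denom_pos {a r : ℝ} (ha : 0 < a) (hr : 0 ≤ r) (hr_lt : r < 4 * √2 / a) :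
    0 < 32 - a ^ 2 * r ^ 2 := by
  rw [lt_div_iff₀' ha] at hr_lt
  have h_sq : (a * r) ^ 2 < (4 * √2) ^ 2 := by gcongr
  rw [mul_pow, mul_pow, Real.sq_sqrt zero_le_two] at h_sq
  linarith

theorem laplacian_radial_barrier_general {E : Type*} [NormedAddCommGroup E]
    [InnerProductSpace ℝ E] [FiniteDimensional ℝ E] (hE : Module.finrank ℝ E = 4)
    (a : ℝ) (x : E) (hx : 32 - a ^ 2 * ‖x‖ ^ 2 ≠ 0) :
    laplacian (fun y : E => 32 * a / (32 - a ^ 2 * ‖y‖ ^ 2)) x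
      = (1 / 4) * (32 * a / (32 - a ^ 2 * ‖x‖ ^ 2)) ^ 3 := by
  have h_first (s : ℝ) (hs : 32 - a ^ 2 * s ≠ 0) :
      HasDerivAt (fun t => 32 * a / (32 - a ^ 2 * t)) (32 * a ^ 3 / (32 - a ^ 2 * s) ^ 2) s := by
    have h := hasDerivAt_const_div_sub_mul_pow (32 * a) 32 (a ^ 2) 1 hs
    simp only [pow_one] at h
    exact h.congr_deriv (by push_cast; ring)
  have h_second : HasDerivAt (fun t => 32 * a ^ 3 / (32 - a ^ 2 * t) ^ 2)
      (64 * a ^ 5 / (32 - a ^ 2 * ‖x‖ ^ 2) ^ 3) (‖x‖ ^ 2) :=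
    (hasDerivAt_const_div_sub_mul_pow (32 * a ^ 3) 32 (a ^ 2) 2 hx).congr_deriv
      (by push_cast; ring)
  have h_nhds : ∀ᶠ s in 𝓝 (‖x‖ ^ 2), 32 - a ^ 2 * s ≠ 0 :=
    ContinuousAt.eventually_ne (by fun_prop) hx
  rw [laplacian_comp_norm_sq (h_nhds.mono h_first) h_second, hE]
  field_simp
  ring

/-- The radial barrier `V_a(x) = 32a / (32 - a²‖x‖²)` on Euclidean `ℝ⁴`
satisfies `Δ V_a = (1/4) V_a³` on the ball `‖x‖ < 4√2 / a`. -/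
theorem laplacian_radial_barrier (a : ℝ) (ha : 0 < a) :
    ∀ x : EuclideanSpace ℝ (Fin 4), ‖x‖ < 4 * Real.sqrt 2 / a →
      laplacian (fun y : EuclideanSpace ℝ (Fin 4) =>
          32 * a / (32 - a ^ 2 * ‖y‖ ^ 2)) x
        = (1 / 4) * (32 * a / (32 - a ^ 2 * ‖x‖ ^ 2)) ^ 3 :=
  fun x hx => laplacian_radial_barrier_general finrank_euclideanSpace_fin a x
    (barrier_denom_pos ha (norm_nonneg x) hx).ne'
end
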